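/- arXiv:2310.07362 — 3 statements merged into one kernel-verified Lean document; each statement's English description precedes it below -/
import Mathlib

section
/- The real vector space of 8×8 Hermitian complex matrices O satisfying C·O = O·C, where C is the D1Q3 collision operator, has real dimension exactly 50; equivalently, the D1Q3 model has exactly 50 linearly independent quantum invariants. -/
open Matrix

/-- The identity Pauli matrix `I`. -/
def PI : Matrix (Fin 2) (Fin 2) ℂ := !![1, 0; 0, 1]

/-- The Pauli matrix `X`. -/
def PX : Matrix (Fin 2) (Fin 2) ℂ := !![0, 1; 1, 0]

/-- The Pauli matrix `Y`. -/
def PY : Matrix (Fin 2) (Fin 2) ℂ := !![0, -Complex.I; Complex.I, 0]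

/-- The Pauli matrix `Z`. -/
def PZ : Matrix (Fin 2) (Fin 2) ℂ := !![1, 0; 0, -1]

/-- The `k`-th binary digit of `s ∈ {0,…,7}`, as an element of `Fin 2`. -/
def bit (k : ℕ) (s : Fin 8) : Fin 2 := ⟨s.val / 2 ^ k % 2, Nat.mod_lt _ (by norm_num)⟩

/-- The Kronecker product `A ⊗ B ⊗ D` of three `2 × 2` matrices, as an `8 × 8` matrix:
its `(i,j)` entry is `A_{i₂ j₂} B_{i₁ j₁} D_{i₀ j₀}` where `i = 4i₂ + 2i₁ + i₀`. -/
def kron3 (A B D : Matrix (Fin 2) (Fin 2) ℂ) : Matrix (Fin 8) (Fin 8) ℂ :=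
  Matrix.of fun i j => A (bit 2 i) (bit 2 j) * B (bit 1 i) (bit 1 j) * D (bit 0 i) (bit 0 j)

/-- The D1Q3 collision operator: the `8 × 8` permutation matrix with
`C e₂ = e₅`, `C e₅ = e₂` and `C e_s = e_s` for `s ∉ {2,5}`. -/
def collC : Matrix (Fin 8) (Fin 8) ℂ :=
  Matrix.of fun i j => if i = Equiv.swap (2 : Fin 8) 5 j then 1 else 0

/-- The real vector space of Hermitian `n × n` complex matrices commuting with `C`,
i.e. the quantum invariants of the collision operator `C`. -/
noncomputable def quantumInvariants {n : Type*} [Fintype n] (C : Matrix n n ℂ) :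
    Submodule ℝ (Matrix n n ℂ) where
  carrier := {O | O.IsHermitian ∧ C * O = O * C}
  add_mem' := fun ha hb =>
    ⟨ha.1.add hb.1, by rw [Matrix.mul_add, Matrix.add_mul, ha.2, hb.2]⟩
  zero_mem' := ⟨Matrix.isHermitian_zero, by rw [Matrix.mul_zero, Matrix.zero_mul]⟩
  smul_mem' := fun r O hO =>
    ⟨by rw [Matrix.IsHermitian, Matrix.conjTranspose_smul, star_trivial, hO.1],
     by rw [Matrix.mul_smul, Matrix.smul_mul, hO.2]⟩

/-!
Conjugation `O ↦ C * O * C` by a Hermitian involution `C` of `ℂⁿ` is an involution of the space of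
matrices, of trace `(tr C)²`, and its fixed points are the matrices commuting with `C`. Averaging
over it projects onto them, and the rank of a projection is its trace, so they form a complex space
of dimension `(n² + (tr C)²) / 2`. This space is closed under conjugate transposition, hence is the
complexification of its Hermitian part, the space of quantum invariants. For D1Q3, `n = 8` and
`tr C = 6`, the number of basis vectors fixed by `C`.
-/

open Module

section StarModule

theorem finrank_selfAdjoint (A : Type*) [AddCommGroup A] [Module ℂ A] [StarAddMonoid A]
    [StarModule ℂ A] [FiniteDimensional ℂ A] :
    finrank ℝ (selfAdjoint A) = finrank ℂ A := by
  have : FiniteDimensional ℝ A := FiniteDimensional.complexToReal A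
  have hker : finrank ℝ (imaginaryPart (A := A)).ker = finrank ℝ (selfAdjoint A) := by
    rw [ker_imaginaryPart]
    rfl
  have hrank := (imaginaryPart (A := A)).finrank_range_add_finrank_ker
  rw [LinearMap.range_eq_top.2 imaginaryPart_surjective, finrank_top, hker,
    finrank_real_of_complex] at hrank
  lia

variable {R A : Type*} [CommSemiring R] [StarRing R] [Semiring A] [StarRing A] [Algebra R A]
  [StarModule R A] {a b : A}

theorem mem_centralizer_singleton_iff_of_isSelfAdjoint_left (ha : IsSelfAdjoint a) :
    b ∈ StarSubalgebra.centralizer R {a} ↔ a * b = b * a := by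
  simp [StarSubalgebra.mem_centralizer_iff, ha.star_eq]

theorem mem_centralizer_singleton_iff_of_isSelfAdjoint_right (hb : IsSelfAdjoint b) :
    b ∈ StarSubalgebra.centralizer R {a} ↔ a * b = b * a := by
  have hstar : star a * b = b * star a ↔ a * b = b * a := by
    rw [← star_inj, star_mul, star_mul, star_star, hb.star_eq, eq_comm]
  simp [StarSubalgebra.mem_centralizer_iff, hstar]

end StarModule

section Involution

theorem two_mul_finrank_eqLocus_id {K V : Type*} [Field K] [NeZero (2 : K)] [AddCommGroup V]
    [Module K V] [FiniteDimensional K V] {f : V →ₗ[K] V} (hf : Function.Involutive f) :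
    2 * (finrank K (LinearMap.eqLocus f LinearMap.id) : K) =
      finrank K V + LinearMap.trace K V f := by
  have hproj : LinearMap.IsProj (LinearMap.eqLocus f LinearMap.id)
      ((2 : K)⁻¹ • (LinearMap.id + f)) := by
    refine ⟨fun x ↦ ?_, fun x (hx : f x = x) ↦ ?_⟩
    · simp [LinearMap.mem_eqLocus, hf x, add_comm]
    · rw [LinearMap.smul_apply, LinearMap.add_apply, LinearMap.id_apply, hx, ← two_smul K x,
        inv_smul_smul₀ two_ne_zero]
  rw [← hproj.trace, map_smul, map_add, LinearMap.trace_id, smul_eq_mul,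
    mul_inv_cancel_left₀ two_ne_zero]

theorem trace_mulLeftRight {R n : Type*} [CommRing R] [Fintype n] (A B : Matrix n n R) :
    LinearMap.trace R (Matrix n n R) (LinearMap.mulLeftRight R (A, B)) = A.trace * B.trace := by
  classical
  have hdiag (i j : n) : (A * Matrix.single i j (1 : R) * B : Matrix n n R) i j =
      A i i * B j j := by
    simp [Matrix.mul_apply, Matrix.single_apply, ite_and]
  rw [LinearMap.trace_eq_matrix_trace R (Matrix.stdBasis R n n), Matrix.trace,
    Fintype.sum_prod_type, Matrix.trace, Matrix.trace, Finset.sum_mul_sum]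
  refine Finset.sum_congr rfl fun i _ ↦ Finset.sum_congr rfl fun j _ ↦ ?_
  rw [Matrix.diag_apply, LinearMap.toMatrix_apply, Matrix.stdBasis_eq_single]
  simp [Matrix.stdBasis, hdiag]

theorem involutive_mulLeftRight {R A : Type*} [CommSemiring R] [Semiring A] [Algebra R A] {a : A}
    (ha : a * a = 1) : Function.Involutive (LinearMap.mulLeftRight R (a, a)) := fun x ↦ by
  calc a * (a * x * a) * a = a * a * x * (a * a) := by simp only [mul_assoc]
    _ = x := by rw [ha, one_mul, mul_one]

theorem mem_eqLocus_mulLeftRight_iff {R A : Type*} [CommSemiring R] [Semiring A] [Algebra R A]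
    {a x : A} (ha : a * a = 1) :
    x ∈ LinearMap.eqLocus (LinearMap.mulLeftRight R (a, a)) LinearMap.id ↔ a * x = x * a := by
  change a * x * a = x ↔ _
  refine ⟨fun h ↦ ?_, fun h ↦ by rw [h, mul_assoc, ha, mul_one]⟩
  calc a * x = a * x * a * a := by rw [mul_assoc (a * x), ha, mul_one]
    _ = x * a := by rw [h]

end Involution

section QuantumInvariants

variable {n : Type*} [Fintype n]

/-- The quantum invariants of `C`, as the self-adjoint elements of the star subalgebra of matrices
commuting with both `C` and `Cᴴ`: a Hermitian matrix that commutes with `C` also commutes with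
`Cᴴ`. -/
def quantumInvariantsEquiv [DecidableEq n] (C : Matrix n n ℂ) :
    quantumInvariants C ≃ₗ[ℝ] selfAdjoint (StarSubalgebra.centralizer ℂ {C}) where
  toFun O := ⟨⟨O, (mem_centralizer_singleton_iff_of_isSelfAdjoint_right O.2.1).2 O.2.2⟩,
    Subtype.ext O.2.1⟩
  invFun O := ⟨O, congrArg Subtype.val O.2,
    ((StarSubalgebra.mem_centralizer_iff ℂ).1 O.1.2 C rfl).1⟩
  map_add' _ _ := rfl
  map_smul' _ _ := rfl
  left_inv _ := rfl
  right_inv _ := rfl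

theorem finrank_quantumInvariants [DecidableEq n] (C : Matrix n n ℂ) :
    finrank ℝ (quantumInvariants C) = finrank ℂ (StarSubalgebra.centralizer ℂ {C}) := by
  have : FiniteDimensional ℂ (StarSubalgebra.centralizer ℂ {C}) :=
    FiniteDimensional.finiteDimensional_submodule
      (StarSubalgebra.centralizer ℂ {C}).toSubalgebra.toSubmodule
  rw [(quantumInvariantsEquiv C).finrank_eq, finrank_selfAdjoint]

theorem two_mul_finrank_quantumInvariants [DecidableEq n] {C : Matrix n n ℂ} (hC : C.IsHermitian)
    (hCC : C * C = 1) :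
    2 * (finrank ℝ (quantumInvariants C) : ℂ) = Fintype.card n ^ 2 + C.trace ^ 2 := by
  have hcentralizer : (StarSubalgebra.centralizer ℂ {C}).toSubalgebra.toSubmodule =
      LinearMap.eqLocus (LinearMap.mulLeftRight ℂ (C, C)) LinearMap.id := by
    ext O
    rw [mem_eqLocus_mulLeftRight_iff hCC]
    exact mem_centralizer_singleton_iff_of_isSelfAdjoint_left (R := ℂ) hC
  have hfinrank : finrank ℝ (quantumInvariants C) =
      finrank ℂ (LinearMap.eqLocus (LinearMap.mulLeftRight ℂ (C, C)) LinearMap.id) := by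
    rw [finrank_quantumInvariants, ← hcentralizer]
    rfl
  rw [hfinrank, two_mul_finrank_eqLocus_id (involutive_mulLeftRight hCC), trace_mulLeftRight,
    finrank_matrix, finrank_self, mul_one, Nat.cast_mul, sq, sq]

theorem two_mul_finrank_quantumInvariants_permMatrix [DecidableEq n] {σ : Equiv.Perm n}
    (hσ : σ * σ = 1) :
    2 * finrank ℝ (quantumInvariants (σ.permMatrix ℂ)) =
      Fintype.card n ^ 2 + (Function.fixedPoints σ).ncard ^ 2 := by
  have hHermitian : (σ.permMatrix ℂ).IsHermitian := by
    rw [Matrix.IsHermitian, conjTranspose_permMatrix, inv_eq_of_mul_eq_one_left hσ]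
  have hinvolution : σ.permMatrix ℂ * σ.permMatrix ℂ = 1 := by
    rw [← permMatrix_mul, hσ, permMatrix_one]
  have hdim := two_mul_finrank_quantumInvariants hHermitian hinvolution
  rw [trace_permutation] at hdim
  exact_mod_cast hdim

theorem collC_eq_permMatrix : collC = (Equiv.swap 2 5).permMatrix ℂ := by
  ext i j
  have hswap : i = Equiv.swap 2 5 j ↔ Equiv.swap 2 5 i = j := Equiv.swap_apply_eq_iff.symm
  simp [collC, Equiv.toPEquiv_apply, PEquiv.toMatrix_apply, hswap]

end QuantumInvariants

/-- **D1Q3 has exactly 50 linearly independent quantum invariants:** the real vector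
space of Hermitian `8 × 8` matrices `O` with `C·O = O·C` has real dimension `50`. -/
theorem d1q3_quantum_invariants_dim :
    Module.finrank ℝ (quantumInvariants collC) = 50 := by
  have hfixed : (Function.fixedPoints (Equiv.swap (2 : Fin 8) 5)).ncard = 6 := by
    rw [Set.ncard_eq_toFinset_card']
    decide
  have hdim := two_mul_finrank_quantumInvariants_permMatrix (Equiv.swap_mul_self (2 : Fin 8) 5)
  rw [hfixed, Fintype.card_fin] at hdim
  rw [collC_eq_permMatrix]
  lia
end

section
/- Let C be the linear map on ℂ^64 defined by: C e_21 = e_42 and C e_42 = e_21; C e_a = (−e_a + 2 e_b + 2 e_c)/3 for every cyclic rotation (a,b,c) of the triple (9, 18, 36) and of the triple (27, 45, 54); and C e_s = e_s for all remaining s ∈ {0,…,63}. Then C is unitary and commutes with each of the FHP observables M = Z_0 + Z_1 + Z_2 + Z_3 + Z_4 + Z_5, P_x = Z_0 − Z_3 + (1/2)(Z_1 + Z_5 − Z_2 − Z_4), and P_y = (√3/2)(Z_1 + Z_2 − Z_4 − Z_5). -/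
open Matrix

/-- The Pauli-`Z` operator on qubit `i` of a 6-qubit register: the `64 × 64` diagonal
matrix whose `(s,s)` entry is `(−1)^{n_i(s)}`, where `n_i(s)` is the `i`-th binary
digit of `s`. -/
def Zq (i : ℕ) : Matrix (Fin 64) (Fin 64) ℂ :=
  Matrix.diagonal fun s => (-1 : ℂ) ^ (s.val / 2 ^ i % 2)

/-- The FHP mass observable `M = Z₀ + Z₁ + Z₂ + Z₃ + Z₄ + Z₅`. -/
def massM : Matrix (Fin 64) (Fin 64) ℂ := Zq 0 + Zq 1 + Zq 2 + Zq 3 + Zq 4 + Zq 5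

/-- The FHP `x`-momentum observable `P_x = Z₀ − Z₃ + (1/2)(Z₁ + Z₅ − Z₂ − Z₄)`. -/
noncomputable def momPx : Matrix (Fin 64) (Fin 64) ℂ :=
  Zq 0 - Zq 3 + (1 / 2 : ℂ) • (Zq 1 + Zq 5 - Zq 2 - Zq 4)

/-- The FHP `y`-momentum observable `P_y = (√3/2)(Z₁ + Z₂ − Z₄ − Z₅)`. -/
noncomputable def momPy : Matrix (Fin 64) (Fin 64) ℂ :=
  ((Real.sqrt 3 / 2 : ℝ) : ℂ) • (Zq 1 + Zq 2 - Zq 4 - Zq 5)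

/-- The FHP 3-body collision operator: the `64 × 64` permutation matrix with
`C₃ e₂₁ = e₄₂`, `C₃ e₄₂ = e₂₁` and `C₃ e_s = e_s` for `s ∉ {21, 42}`. -/
def collC3 : Matrix (Fin 64) (Fin 64) ℂ :=
  Matrix.of fun i j => if i = Equiv.swap (21 : Fin 64) 42 j then 1 else 0

/-- The column of the unitary mixing `e_a ↦ (−e_a + 2 e_b + 2 e_c)/3`. -/
noncomputable def mixCol (i a b c : Fin 64) : ℂ :=
  (1 / 3 : ℂ) * (-(if i = a then 1 else 0) + 2 * (if i = b then 1 else 0)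
    + 2 * (if i = c then 1 else 0))

/-- The unitary FHP 0-momentum collision operator `C`: it exchanges `e₂₁ ↔ e₄₂`
(3-body collision), sends `e_a` to `(−e_a + 2 e_b + 2 e_c)/3` for every cyclic
rotation `(a,b,c)` of `(9,18,36)` and of `(27,45,54)` (unitary realization of the
non-deterministic 2- and 4-body collisions), and fixes all other basis states. -/
noncomputable def collFHP : Matrix (Fin 64) (Fin 64) ℂ :=
  Matrix.of fun i j =>
    if j = 21 then (if i = 42 then 1 else 0)
    else if j = 42 then (if i = 21 then 1 else 0)
    else if j = 9 then mixCol i 9 18 36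
    else if j = 18 then mixCol i 18 36 9
    else if j = 36 then mixCol i 36 9 18
    else if j = 27 then mixCol i 27 45 54
    else if j = 45 then mixCol i 45 54 27
    else if j = 54 then mixCol i 54 27 45
    else (if i = j then 1 else 0)

/-!
`C` is the reflection `2P - 1`, where `P` averages a vector over the classes `{21, 42}`,
`{9, 18, 36}`, `{27, 45, 54}` and the remaining singletons: on a class of size `k` it is `2J/k - 1`,
with `J` the all-ones matrix, which is the identity for `k = 1`, the swap for `k = 2` and the mixing
`e_a ↦ (-e_a + 2 e_b + 2 e_c)/3` for `k = 3`. As `P` is an orthogonal projection, `C` is unitary. As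
`P` commutes with every diagonal matrix constant on the classes, so does `C`, and each of the three
observables is such a matrix.
-/

section FiberReflection

variable {n κ K : Type*} [Fintype n] [DecidableEq κ] [DivisionRing K]

variable (K) in
/-- The matrix of the operator that averages a vector over each fiber of `f`: the projection onto
the vectors that are constant on the fibers. -/
def fiberAverage (f : n → κ) : Matrix n n K :=
  Matrix.of fun i j => if f i = f j then (Finset.card {k | f k = f j} : K)⁻¹ else 0

theorem fiberAverage_apply (f : n → κ) (i j : n) :
    fiberAverage K f i j = if f i = f j then (Finset.card {k | f k = f j} : K)⁻¹ else 0 :=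
  rfl

theorem isSelfAdjoint_fiberAverage [StarRing K] (f : n → κ) :
    IsSelfAdjoint (fiberAverage K f) := by
  ext i j
  rw [Matrix.star_apply, fiberAverage_apply, fiberAverage_apply]
  by_cases h : f i = f j
  · simp [h]
  · simp [h, Ne.symm h]

theorem isIdempotentElem_fiberAverage [CharZero K] (f : n → κ) :
    IsIdempotentElem (fiberAverage K f) := by
  ext i j
  have hcard : (Finset.card {k | f k = f j} : K) ≠ 0 :=
    Nat.cast_ne_zero.mpr (Finset.card_ne_zero_of_mem (a := j) (by simp))
  have hterm (k : n) : fiberAverage K f i k * fiberAverage K f k j =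
      if f k = f j then fiberAverage K f i j * (Finset.card {k | f k = f j} : K)⁻¹ else 0 := by
    by_cases hkj : f k = f j <;> simp [fiberAverage_apply, hkj]
  calc (fiberAverage K f * fiberAverage K f) i j
      = Finset.card {k | f k = f j} •
          (fiberAverage K f i j * (Finset.card {k | f k = f j} : K)⁻¹) := by
        simp_rw [Matrix.mul_apply, hterm, ← Finset.sum_filter, Finset.sum_const]
    _ = fiberAverage K f i j := by
        rw [nsmul_eq_mul, (Nat.cast_commute _ _).eq, inv_mul_cancel_right₀ hcard]

theorem isStarProjection_fiberAverage [StarRing K] [CharZero K] (f : n → κ) :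
    IsStarProjection (fiberAverage K f) :=
  ⟨isIdempotentElem_fiberAverage f, isSelfAdjoint_fiberAverage f⟩

variable [DecidableEq n]

theorem commute_fiberAverage_diagonal {f : n → κ} {d : n → K} (hd : d.FactorsThrough f) :
    Commute (fiberAverage K f) (Matrix.diagonal d) := by
  ext i j
  rw [Matrix.mul_diagonal, Matrix.diagonal_mul, fiberAverage_apply]
  split_ifs with h
  · rw [hd h, (Nat.cast_commute _ _).inv_left₀.eq]
  · rw [zero_mul, mul_zero]

variable (K) in
/-- The reflection `2P - 1` through the space of vectors that are constant on the fibers of `f`,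
where `P` is the fiber average. -/
def fiberReflection (f : n → κ) : Matrix n n K :=
  2 * fiberAverage K f - 1

theorem fiberReflection_apply_of_fiber_eq {f : n → κ} {j : n} {s : Finset n}
    (hs : ∀ k, f k = f j ↔ k ∈ s) (i : n) :
    fiberReflection K f i j = (if i ∈ s then 2 / (s.card : K) else 0) - if i = j then 1 else 0 := by
  have hfiber : ({k | f k = f j} : Finset n) = s := by ext k; simp [hs]
  rw [fiberReflection, two_mul, Matrix.sub_apply, Matrix.add_apply, Matrix.one_apply,
    fiberAverage_apply, hfiber, if_congr (hs i) rfl rfl]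
  split_ifs <;> simp [← two_mul, div_eq_mul_inv]

theorem fiberReflection_apply_of_fiber_singleton {f : n → κ} {a : n} (hf : ∀ k, f k = f a ↔ k = a)
    (i : n) : fiberReflection K f i a = if i = a then 1 else 0 := by
  rw [fiberReflection_apply_of_fiber_eq (s := {a}) (by simpa using hf)]
  by_cases ha : i = a
  · simp only [ha, Finset.mem_singleton, if_true, Finset.card_singleton]
    norm_num
  · simp [ha]

theorem fiberReflection_apply_of_fiber_pair [CharZero K] {f : n → κ} {a b : n} (hab : a ≠ b)
    (hf : ∀ k, f k = f a ↔ k = a ∨ k = b) (i : n) :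
    fiberReflection K f i a = if i = b then 1 else 0 := by
  rw [fiberReflection_apply_of_fiber_eq (s := {a, b}) (by simpa using hf), Finset.card_pair hab]
  by_cases ha : i = a <;> simp [ha, hab]

theorem fiberReflection_apply_of_fiber_triple [CharZero K] {f : n → κ} {a b c : n}
    (hab : a ≠ b) (hac : a ≠ c) (hbc : b ≠ c) (hf : ∀ k, f k = f a ↔ k = a ∨ k = b ∨ k = c)
    (i : n) :
    fiberReflection K f i a = (1 / 3) * (-(if i = a then 1 else 0) + 2 * (if i = b then 1 else 0)
      + 2 * (if i = c then 1 else 0)) := by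
  rw [fiberReflection_apply_of_fiber_eq (s := {a, b, c}) (by simpa using hf),
    Finset.card_eq_three.mpr ⟨a, b, c, hab, hac, hbc, rfl⟩]
  simp only [Finset.mem_insert, Finset.mem_singleton]
  split_ifs <;> simp_all <;> norm_num

theorem fiberReflection_mem_unitary [StarRing K] [CharZero K] (f : n → κ) :
    fiberReflection K f ∈ unitary (Matrix n n K) :=
  (isStarProjection_fiberAverage f).two_mul_sub_one_mem_unitary

theorem commute_fiberReflection_diagonal {f : n → κ} {d : n → K} (hd : d.FactorsThrough f) :
    Commute (fiberReflection K f) (Matrix.diagonal d) :=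
  ((Commute.ofNat_left 2 _).mul_left (commute_fiberAverage_diagonal hd)).sub_left
    (Commute.one_left _)

end FiberReflection

/-- The configurations into which `s` can scatter at a collision: the 3-body, 2-body and 4-body
zero-momentum configurations form one class each, and every other class is a singleton. -/
def collisionClass (s : Fin 64) : Finset (Fin 64) :=
  if s ∈ ({21, 42} : Finset (Fin 64)) then {21, 42}
  else if s ∈ ({9, 18, 36} : Finset (Fin 64)) then {9, 18, 36}
  else if s ∈ ({27, 45, 54} : Finset (Fin 64)) then {27, 45, 54}
  else {s}

theorem collisionClass_eq_iff_mem :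
    ∀ s t : Fin 64, collisionClass s = collisionClass t ↔ s ∈ collisionClass t := by
  decide

theorem factorsThrough_collisionClass {α : Type*} {d : Fin 64 → α} (h42 : d 42 = d 21)
    (h18 : d 18 = d 9) (h36 : d 36 = d 9) (h45 : d 45 = d 27) (h54 : d 54 = d 27) :
    d.FactorsThrough collisionClass := by
  intro s t hst
  rw [collisionClass_eq_iff_mem, collisionClass] at hst
  split_ifs at hst <;> grind

theorem collFHP_eq_fiberReflection : collFHP = fiberReflection ℂ collisionClass := by
  ext i j
  symm
  by_cases hj : j ∈ ({21, 42, 9, 18, 36, 27, 45, 54} : Finset (Fin 64))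
  · fin_cases hj
    · exact fiberReflection_apply_of_fiber_pair (b := 42) (by decide) (by decide) i
    · exact fiberReflection_apply_of_fiber_pair (b := 21) (by decide) (by decide) i
    · exact fiberReflection_apply_of_fiber_triple (b := 18) (c := 36)
        (by decide) (by decide) (by decide) (by decide) i
    · exact fiberReflection_apply_of_fiber_triple (b := 36) (c := 9)
        (by decide) (by decide) (by decide) (by decide) i
    · exact fiberReflection_apply_of_fiber_triple (b := 9) (c := 18)
        (by decide) (by decide) (by decide) (by decide) i
    · exact fiberReflection_apply_of_fiber_triple (b := 45) (c := 54)
        (by decide) (by decide) (by decide) (by decide) i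
    · exact fiberReflection_apply_of_fiber_triple (b := 54) (c := 27)
        (by decide) (by decide) (by decide) (by decide) i
    · exact fiberReflection_apply_of_fiber_triple (b := 27) (c := 45)
        (by decide) (by decide) (by decide) (by decide) i
  · simp only [Finset.mem_insert, Finset.mem_singleton, not_or] at hj
    have hclass (k : Fin 64) : collisionClass k = collisionClass j ↔ k = j := by
      rw [collisionClass_eq_iff_mem]
      simp [collisionClass, hj]
    simp [fiberReflection_apply_of_fiber_singleton hclass, collFHP, hj]

/-- The additive observable in which a particle of velocity `c_i` carries the charge `w i`, up to
the affine change of variable `Z_i = 1 - 2 n_i` from occupation numbers. -/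
noncomputable def additiveObservable (w : Fin 6 → ℂ) : Matrix (Fin 64) (Fin 64) ℂ :=
  ∑ i, w i • Zq i

theorem additiveObservable_eq_diagonal (w : Fin 6 → ℂ) :
    additiveObservable w =
      Matrix.diagonal fun s : Fin 64 => ∑ i : Fin 6, w i * (-1) ^ (s.val / 2 ^ i.val % 2) := by
  ext s t
  by_cases h : s = t <;> simp [additiveObservable, Zq, Matrix.sum_apply, h]

/-- The 2- and 4-body collisions replace head-on pairs by head-on pairs, the 3-body collisions
exchange the two triangles of velocities; the hypotheses say that neither changes the charge. -/
theorem commute_collFHP_additiveObservable {w : Fin 6 → ℂ} (hpair₀₁ : w 0 + w 3 = w 1 + w 4)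
    (hpair₁₂ : w 1 + w 4 = w 2 + w 5) (htriangle : w 0 + w 2 + w 4 = w 1 + w 3 + w 5) :
    Commute collFHP (additiveObservable w) := by
  rw [collFHP_eq_fiberReflection, additiveObservable_eq_diagonal]
  apply commute_fiberReflection_diagonal
  apply factorsThrough_collisionClass <;>
    simp only [Fin.sum_univ_six, Fin.coe_ofNat_eq_mod, Nat.reduceMod, Nat.reducePow, Nat.reduceDiv,
      pow_zero, pow_one]
  · linear_combination 2 * htriangle
  · linear_combination 2 * hpair₀₁
  · linear_combination 2 * hpair₀₁ + 2 * hpair₁₂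
  · linear_combination 2 * hpair₁₂
  · linear_combination 2 * hpair₀₁ + 2 * hpair₁₂

theorem massM_eq_additiveObservable : massM = additiveObservable 1 := by
  simp [massM, additiveObservable, Fin.sum_univ_six]

theorem momPx_eq_additiveObservable :
    momPx = additiveObservable ![1, 1 / 2, -1 / 2, -1, -1 / 2, 1 / 2] := by
  simp only [momPx, additiveObservable, Fin.sum_univ_six, Matrix.cons_val, Fin.coe_ofNat_eq_mod,
    Nat.reduceMod]
  module

theorem momPy_eq_smul_additiveObservable :
    momPy = ((Real.sqrt 3 / 2 : ℝ) : ℂ) • additiveObservable ![0, 1, 1, 0, -1, -1] := by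
  simp only [momPy, additiveObservable, Fin.sum_univ_six, Matrix.cons_val, Fin.coe_ofNat_eq_mod,
    Nat.reduceMod]
  module

/-- **The FHP 0-momentum collision operator is unitary and conserves mass and
momentum:** `C` is unitary and commutes with `M`, `P_x` and `P_y`. -/
theorem collFHP_unitary_conserves_mass_momentum :
    collFHP ∈ Matrix.unitaryGroup (Fin 64) ℂ ∧
    collFHP * massM = massM * collFHP ∧
    collFHP * momPx = momPx * collFHP ∧
    collFHP * momPy = momPy * collFHP := by
  refine ⟨?_, ?_, ?_, ?_⟩
  · rw [collFHP_eq_fiberReflection]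
    exact fiberReflection_mem_unitary collisionClass
  · rw [massM_eq_additiveObservable]
    apply commute_collFHP_additiveObservable <;> simp
  · rw [momPx_eq_additiveObservable]
    apply commute_collFHP_additiveObservable <;> simp <;> norm_num
  · rw [momPy_eq_smul_additiveObservable]
    apply Commute.smul_right
    apply commute_collFHP_additiveObservable <;> simp
end

section
/- Let C₃ be the 64×64 permutation matrix on ℂ^64 defined by C₃ e_21 = e_42, C₃ e_42 = e_21, and C₃ e_s = e_s for s ∉ {21, 42}. The real vector space of 64×64 Hermitian complex matrices O satisfying C₃·O = O·C₃ has real dimension exactly 3970 = 4^6 − 126; equivalently, the FHP model with only the 3-body collision has exactly 3970 linearly independent quantum invariants. -/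
/-!
A Hermitian matrix is determined by the real matrix `Re O + Im O`, because `Re O` is symmetric and
`Im O` antisymmetric, and every real matrix arises in this way. The correspondence is compatible
with relabelling the basis, so the quantum invariants of the permutation matrix of `σ` correspond to
the real functions on pairs of basis states that are constant on the orbits of `σ × σ`. Burnside's
formula counts these orbits. For a transposition of two among `N` states, of order two and with
`N - 2` fixed points, the count is `(N² + (N - 2)²) / 2 = (N - 1)² + 1`.
-/

open Matrix

section Orbits

open MulAction

variable {G X : Type*} [Group G] [MulAction G X]

lemma exists_comp_orbitRel_zpowers_mk_eq_iff {Y : Type*} (g : G) (f : X → Y) :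
    (∃ φ : orbitRel.Quotient (Subgroup.zpowers g) X → Y, (fun x => φ ⟦x⟧) = f) ↔
      ∀ x, f (g • x) = f x := by
  constructor
  · rintro ⟨φ, rfl⟩ x
    exact congrArg φ (Quotient.sound ⟨⟨g, Subgroup.mem_zpowers g⟩, rfl⟩)
  · intro hf
    have fixed_zpow (k : ℤ) : DomMulAct.mk g ^ k • f = f := mem_fixedBy_zpow (funext hf) k
    refine ⟨Quotient.lift f ?_, rfl⟩
    rintro _ x ⟨⟨_, k, rfl⟩, rfl⟩
    exact congrFun (fixed_zpow k) x

lemma card_orbitRel_zpowers_mul_orderOf [Finite X] {g : G} (hg : IsOfFinOrder g) :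
    Nat.card (orbitRel.Quotient (Subgroup.zpowers g) X) * orderOf g =
      ∑ k ∈ Finset.range (orderOf g), Nat.card (fixedBy X (g ^ k)) := by
  classical
  have := Fintype.ofFinite X
  have := Fintype.ofEquiv _ (finEquivZPowers hg)
  have burnside := sum_card_fixedBy_eq_card_orbits_mul_card_group (Subgroup.zpowers g) X
  simp only [← Nat.card_eq_fintype_card, Nat.card_zpowers] at burnside
  rw [← burnside, Finset.sum_range]
  exact ((finEquivZPowers hg).sum_comp fun h => Nat.card (fixedBy X h)).symm

lemma card_fixedBy_prod {Y : Type*} [MulAction G Y] (g : G) :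
    Nat.card (fixedBy (X × Y) g) = Nat.card (fixedBy X g) * Nat.card (fixedBy Y g) := by
  have fixedBy_prod : fixedBy (X × Y) g = fixedBy X g ×ˢ fixedBy Y g := by
    ext ⟨x, y⟩
    simp
  rw [fixedBy_prod, Nat.card_congr (Equiv.Set.prod _ _), Nat.card_prod]

lemma card_fixedBy_perm {n : Type*} [Fintype n] [DecidableEq n] (σ : Equiv.Perm n) :
    Nat.card (fixedBy n σ) = Fintype.card n - σ.support.card := by
  have fixedBy_eq : fixedBy n σ = ↑(σ.supportᶜ) := by
    ext i
    simp
  rw [fixedBy_eq, Nat.card_coe_set_eq, Set.ncard_coe_finset, Finset.card_compl]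

end Orbits

section HermitianOfReal

variable {m n : Type*}

/-- The Hermitian matrix `O` with `Re O + Im O = A`: its real part is the symmetric part of `A` and
its imaginary part the antisymmetric part of `A`. This parametrises Hermitian matrices linearly by
real matrices. -/
noncomputable def hermitianOfReal : Matrix n n ℝ →ₗ[ℝ] Matrix n n ℂ where
  toFun A := Matrix.of fun i j => ⟨(A i j + A j i) / 2, (A i j - A j i) / 2⟩
  map_add' A B := by
    ext i j
    simp only [Matrix.add_apply, Matrix.of_apply]
    apply Complex.ext <;> simp only [Complex.add_re, Complex.add_im] <;> ring
  map_smul' r A := by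
    ext i j
    simp only [Matrix.smul_apply, Matrix.of_apply, RingHom.id_apply]
    apply Complex.ext <;> simp only [Complex.smul_re, Complex.smul_im, smul_eq_mul] <;> ring

lemma hermitianOfReal_apply (A : Matrix n n ℝ) (i j : n) :
    hermitianOfReal A i j = ⟨(A i j + A j i) / 2, (A i j - A j i) / 2⟩ :=
  rfl

lemma hermitianOfReal_submatrix (A : Matrix n n ℝ) (f : m → n) :
    hermitianOfReal (A.submatrix f f) = (hermitianOfReal A).submatrix f f :=
  rfl

lemma hermitianOfReal_injective :
    Function.Injective (hermitianOfReal : Matrix n n ℝ →ₗ[ℝ] Matrix n n ℂ) := by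
  refine Function.LeftInverse.injective (g := fun O => O.map fun z => z.re + z.im) fun A => ?_
  ext i j
  simp only [Matrix.map_apply, hermitianOfReal_apply]
  ring

lemma exists_hermitianOfReal_eq_iff (O : Matrix n n ℂ) :
    (∃ A, hermitianOfReal A = O) ↔ O.IsHermitian := by
  constructor
  · rintro ⟨A, rfl⟩
    refine Matrix.IsHermitian.ext fun i j => ?_
    rw [hermitianOfReal_apply, hermitianOfReal_apply, RCLike.star_def]
    apply Complex.ext <;> simp only [Complex.conj_re, Complex.conj_im] <;> ring
  · intro hO
    refine ⟨O.map fun z => z.re + z.im, ?_⟩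
    ext i j
    have re_symm : (O j i).re = (O i j).re := by simp [← hO.apply j i]
    have im_antisymm : (O j i).im = -(O i j).im := by simp [← hO.apply j i]
    rw [hermitianOfReal_apply]
    apply Complex.ext <;> simp only [Matrix.map_apply, re_symm, im_antisymm] <;> ring

end HermitianOfReal

section OrbitMatrix

open MulAction

variable {n : Type*} (R : Type*) [Semiring R] (σ : Equiv.Perm n)

/-- The matrix whose `(i, j)` entry is the value of a function at the orbit of `(i, j)` under
the diagonal action of the powers of `σ`. This parametrises the matrices invariant under
relabelling by `σ`. -/
def orbitMatrix :
    (orbitRel.Quotient (Subgroup.zpowers σ) (n × n) → R) →ₗ[R] Matrix n n R where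
  toFun φ := Matrix.of fun i j => φ ⟦(i, j)⟧
  map_add' _ _ := rfl
  map_smul' _ _ := rfl

lemma orbitMatrix_apply (φ : orbitRel.Quotient (Subgroup.zpowers σ) (n × n) → R) (i j : n) :
    orbitMatrix R σ φ i j = φ ⟦(i, j)⟧ :=
  rfl

lemma orbitMatrix_injective : Function.Injective (orbitMatrix R σ) := by
  intro φ ψ h
  ext ⟨i, j⟩
  exact congrFun₂ h i j

lemma exists_orbitMatrix_eq_iff (A : Matrix n n R) :
    (∃ φ, orbitMatrix R σ φ = A) ↔ A.submatrix σ σ = A := by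
  have orbit_iff := exists_comp_orbitRel_zpowers_mk_eq_iff σ fun p : n × n => A p.1 p.2
  simpa [funext_iff, ← Matrix.ext_iff, orbitMatrix_apply] using orbit_iff

end OrbitMatrix

section PermMatrix

open MulAction

variable {n : Type*} [DecidableEq n] [Fintype n]

lemma permMatrix_mul_eq_mul_permMatrix_iff {R : Type*} [NonAssocSemiring R] (σ : Equiv.Perm n)
    (M : Matrix n n R) :
    σ.permMatrix R * M = M * σ.permMatrix R ↔ M.submatrix σ σ = M := by
  rw [PEquiv.toMatrix_toPEquiv_mul, PEquiv.mul_toMatrix_toPEquiv]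
  constructor <;> intro h <;> ext i j
  · simpa using congrFun₂ h i (σ j)
  · simpa using congrFun₂ h i (σ.symm j)

lemma mem_quantumInvariants_permMatrix {σ : Equiv.Perm n} {O : Matrix n n ℂ} :
    O ∈ quantumInvariants (σ.permMatrix ℂ) ↔ O.IsHermitian ∧ O.submatrix σ σ = O :=
  and_congr_right' (permMatrix_mul_eq_mul_permMatrix_iff σ O)

lemma quantumInvariants_permMatrix_eq_range (σ : Equiv.Perm n) :
    quantumInvariants (σ.permMatrix ℂ) = LinearMap.range (hermitianOfReal ∘ₗ orbitMatrix ℝ σ) := by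
  ext O
  rw [mem_quantumInvariants_permMatrix, ← exists_hermitianOfReal_eq_iff]
  constructor
  · rintro ⟨⟨A, rfl⟩, hA⟩
    rw [← hermitianOfReal_submatrix, hermitianOfReal_injective.eq_iff,
      ← exists_orbitMatrix_eq_iff] at hA
    obtain ⟨φ, rfl⟩ := hA
    exact ⟨φ, rfl⟩
  · rintro ⟨φ, rfl⟩
    have invariant := (exists_orbitMatrix_eq_iff ℝ σ _).1 ⟨φ, rfl⟩
    exact ⟨⟨_, rfl⟩, congrArg hermitianOfReal invariant⟩

theorem finrank_quantumInvariants_permMatrix (σ : Equiv.Perm n) :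
    Module.finrank ℝ (quantumInvariants (σ.permMatrix ℂ)) =
      Nat.card (orbitRel.Quotient (Subgroup.zpowers σ) (n × n)) := by
  have := Fintype.ofFinite (orbitRel.Quotient (Subgroup.zpowers σ) (n × n))
  have parametrisation_injective : Function.Injective (hermitianOfReal ∘ₗ orbitMatrix ℝ σ) :=
    hermitianOfReal_injective.comp (orbitMatrix_injective ℝ σ)
  rw [quantumInvariants_permMatrix_eq_range,
    LinearMap.finrank_range_of_inj parametrisation_injective,
    Module.finrank_fintype_fun_eq_card, Nat.card_eq_fintype_card]

theorem finrank_quantumInvariants_permMatrix_mul_orderOf (σ : Equiv.Perm n) :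
    Module.finrank ℝ (quantumInvariants (σ.permMatrix ℂ)) * orderOf σ =
      ∑ k ∈ Finset.range (orderOf σ), (Fintype.card n - (σ ^ k).support.card) ^ 2 := by
  simp only [finrank_quantumInvariants_permMatrix,
    card_orbitRel_zpowers_mul_orderOf (isOfFinOrder_of_finite σ), card_fixedBy_prod,
    card_fixedBy_perm, sq]

theorem fhp_B3_quantum_invariants_dim_general {a b : n} (hab : a ≠ b) :
    Module.finrank ℝ (quantumInvariants ((Equiv.swap a b).permMatrix ℂ)) =
      (Fintype.card n - 1) ^ 2 + 1 := by
  have order_two : orderOf (Equiv.swap a b) = 2 :=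
    (Equiv.Perm.swap_isSwap_iff.2 hab).orderOf
  have burnside := finrank_quantumInvariants_permMatrix_mul_orderOf (Equiv.swap a b)
  rw [order_two, Finset.sum_range_succ, Finset.sum_range_one, pow_zero, pow_one,
    Equiv.Perm.support_one, Finset.card_empty, Nat.sub_zero,
    Equiv.Perm.card_support_swap hab] at burnside
  have two_le_card : 2 ≤ Fintype.card n := Fintype.one_lt_card_iff.2 ⟨a, b, hab⟩
  obtain ⟨N, hN⟩ := Nat.exists_eq_add_of_le' two_le_card
  simp only [hN, Nat.add_sub_cancel, Nat.add_succ_sub_one] at burnside ⊢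
  linarith

end PermMatrix

lemma collC3_eq_permMatrix_swap : collC3 = (Equiv.swap 21 42).permMatrix ℂ := by
  ext i j
  simp [collC3, PEquiv.toMatrix_apply, Equiv.swap_apply_eq_iff, -PEquiv.toMatrix_toPEquiv_apply]

/-- **Counting quantum invariants of FHP with only the 3-body collision:** the real
vector space of Hermitian `64 × 64` matrices `O` with `C₃·O = O·C₃` has real dimension
exactly `3970 = 4⁶ − 126`. -/
theorem fhp_B3_quantum_invariants_dim :
    Module.finrank ℝ (quantumInvariants collC3) = 3970 ∧ 3970 = 4 ^ 6 - 126 := by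
  rw [collC3_eq_permMatrix_swap, fhp_B3_quantum_invariants_dim_general (by decide)]
  norm_num
end
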